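/- Let F be a field of characteristic zero, V a finite-dimensional F-vector space, N a nilpotent endomorphism of V, and w an integer. There exists a unique ascending filtration W = (W_i)_{i∈ℤ} on V such that (1) N(W_i) ⊆ W_{i−2} for all i ∈ ℤ, and (2) for every integer α > 0, the map Gr^W_{w+α} V → Gr^W_{w−α} V induced by N^α is an isomorphism. -/

import Mathlib

/-- `W` is an ascending filtration on `V`, exhaustive and separated, which is the weight
filtration centered at `w` associated to the nilpotent endomorphism `N`: it satisfies
`N (W i) ⊆ W (i - 2)` and for every `α > 0` the map `Gr_{w+α} V → Gr_{w-α} V` induced by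
`N ^ α` is an isomorphism (expressed by surjectivity and injectivity of the induced map
on subquotients). -/
def IsWeightFiltration {F V : Type*} [Field F] [AddCommGroup V] [Module F V]
    (N : V →ₗ[F] V) (w : ℤ) (W : ℤ → Submodule F V) : Prop :=
  Monotone W ∧
  (∃ a : ℤ, ∀ i ≤ a, W i = ⊥) ∧
  (∃ b : ℤ, ∀ i, b ≤ i → W i = ⊤) ∧
  (∀ i : ℤ, (W i).map N ≤ W (i - 2)) ∧
  (∀ α : ℤ, 0 < α →
    W (w - α) ≤ W (w - α - 1) ⊔ (W (w + α)).map (N ^ α.toNat) ∧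
    ∀ v ∈ W (w + α), (N ^ α.toNat) v ∈ W (w - α - 1) → v ∈ W (w + α - 1))

/-!
Normalise the centre to `0`. In any weight filtration, descending induction on `n ≥ 0` shows that
`W (-n) = N ^ n (W n)` and `ker (N ^ (n + 1)) ≤ W n`. Now if `v ∈ W n`, then
`N ^ (n + 1) v ∈ W (-n - 2) = N ^ (n + 2) (W (n + 2))`, so `v` differs from an element of
`N (W (n + 2))` by an element of `ker (N ^ (n + 1))`. Hence
`W n = N (W (n + 2)) + ker (N ^ (n + 1))`, and as `W n` is everything for large `n`, these
recursions determine `W`. Solving them gives `W k = ∑ i, N ^ i (ker (N ^ (2 * i + k + 1)))`, and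
this is a weight filtration.
-/

open Filter LinearMap

theorem forall_of_eventually_atTop_of_forall_gt {P : ℕ → Prop} (hP : ∀ᶠ n in atTop, P n)
    (step : ∀ n, (∀ m > n, P m) → P n) (n : ℕ) : P n := by
  obtain ⟨b, hb⟩ := eventually_atTop.1 hP
  suffices h : ∀ k n, b ≤ n + k → P n from h b n (Nat.le_add_left b n)
  intro k
  induction k with
  | zero => exact hb
  | succ k ih => exact fun n hn ↦ step n fun m hm ↦ ih m (by omega)

section PowersOfEndomorphism

variable {R M : Type*}

theorem map_pow_le_of_map_le [Semiring R] [AddCommMonoid M] [Module R M] {N : M →ₗ[R] M}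
    {d : ℤ} {W : ℤ → Submodule R M} (hW : ∀ i, (W i).map N ≤ W (i - d)) (n : ℕ) (i : ℤ) :
    (W i).map (N ^ n) ≤ W (i - n * d) := by
  induction n with
  | zero => simp [Module.End.one_eq_id]
  | succ n ih =>
    calc (W i).map (N ^ (n + 1))
        = ((W i).map (N ^ n)).map N := by
          rw [pow_succ', Module.End.mul_eq_comp, Submodule.map_comp]
      _ ≤ (W (i - n * d)).map N := Submodule.map_mono ih
      _ ≤ W (i - n * d - d) := hW _
      _ = W (i - (n + 1 : ℕ) * d) := by congr 1; push_cast; ring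

theorem comap_pow_map_pow_succ [Ring R] [AddCommGroup M] [Module R M] (N : M →ₗ[R] M) (n : ℕ)
    (P : Submodule R M) : (P.map (N ^ (n + 1))).comap (N ^ n) = P.map N ⊔ ker (N ^ n) := by
  rw [pow_succ, Module.End.mul_eq_comp, Submodule.map_comp, Submodule.comap_map_eq]

end PowersOfEndomorphism

/-- The monodromy filtration of an endomorphism `N`, which for nilpotent `N` is the weight
filtration centered at `0`. Where `2 * i + k + 1` is negative, `Int.toNat` truncates it to `0`, so
that the `i`-th summand is `0`. -/
def monodromyFiltration {R M : Type*} [Semiring R] [AddCommMonoid M] [Module R M]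
    (N : M →ₗ[R] M) (k : ℤ) : Submodule R M :=
  ⨆ i : ℕ, (ker (N ^ (2 * (i : ℤ) + k + 1).toNat)).map (N ^ i)

section MonodromyFiltration

variable {R M : Type*} [Semiring R] [AddCommMonoid M] [Module R M] (N : M →ₗ[R] M)

theorem monodromyFiltration_mono : Monotone (monodromyFiltration N) := fun _ _ h ↦
  iSup_mono fun _ ↦ Submodule.map_mono (N.iterateKer.monotone (by omega))

theorem map_monodromyFiltration_le (k : ℤ) :
    (monodromyFiltration N k).map N ≤ monodromyFiltration N (k - 2) := by
  rw [monodromyFiltration, Submodule.map_iSup]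
  refine iSup_le fun i ↦ le_iSup_of_le (i + 1) ?_
  rw [← Submodule.map_comp, pow_succ' N i, Module.End.mul_eq_comp]
  exact Submodule.map_mono (N.iterateKer.monotone (by push_cast; omega))

theorem ker_pow_le_monodromyFiltration {n : ℕ} {k : ℤ} (h : n ≤ k + 1) :
    ker (N ^ n) ≤ monodromyFiltration N k := by
  refine le_iSup_of_le 0 ?_
  rw [pow_zero, Module.End.one_eq_id, Submodule.map_id]
  exact N.iterateKer.monotone (by push_cast; omega)

theorem monodromyFiltration_neg_le_map_pow (n : ℕ) :
    monodromyFiltration N (-n) ≤ (monodromyFiltration N n).map (N ^ n) := by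
  refine iSup_le fun i ↦ ?_
  rcases le_or_gt n i with hni | hin
  · obtain ⟨j, rfl⟩ := Nat.exists_eq_add_of_le hni
    rw [pow_add, Module.End.mul_eq_comp, Submodule.map_comp]
    exact Submodule.map_mono
      (le_iSup_of_le j (Submodule.map_mono (N.iterateKer.monotone (by push_cast; omega))))
  · have ker_le : ker (N ^ (2 * (i : ℤ) + -n + 1).toNat) ≤ ker (N ^ i) :=
      N.iterateKer.monotone (by omega)
    exact Submodule.map_le_iff_le_comap.2 (ker_le.trans (Submodule.comap_mono bot_le))

variable {N} {n : ℕ}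

theorem monodromyFiltration_eq_bot (hN : N ^ n = 0) {k : ℤ} (hk : k ≤ -n) :
    monodromyFiltration N k = ⊥ :=
  eq_bot_iff.2 <| calc
    monodromyFiltration N k ≤ monodromyFiltration N (-n) := monodromyFiltration_mono N hk
    _ ≤ (monodromyFiltration N n).map (N ^ n) := monodromyFiltration_neg_le_map_pow N n
    _ = ⊥ := by rw [hN, Submodule.map_zero]

theorem monodromyFiltration_eq_top (hN : N ^ n = 0) {k : ℤ} (hk : n ≤ k + 1) :
    monodromyFiltration N k = ⊤ :=
  eq_top_iff.2 <| calc
    ⊤ = ker (N ^ n) := by rw [hN, ker_zero]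
    _ ≤ monodromyFiltration N k := ker_pow_le_monodromyFiltration N hk

end MonodromyFiltration

theorem mem_monodromyFiltration_sub_one_of_pow_apply_mem {R M : Type*} [Ring R] [AddCommGroup M]
    [Module R M] (N : M →ₗ[R] M) {n : ℕ} {v : M}
    (hv : (N ^ n) v ∈ monodromyFiltration N (-n - 1)) : v ∈ monodromyFiltration N (n - 1) := by
  have hmem : (N ^ n) v ∈ (monodromyFiltration N (n + 1 : ℕ)).map (N ^ (n + 1)) :=
    monodromyFiltration_neg_le_map_pow N (n + 1) (by convert hv using 2; push_cast; ring)
  have hmap : (monodromyFiltration N (n + 1 : ℕ)).map N ≤ monodromyFiltration N (n - 1) :=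
    (map_monodromyFiltration_le N _).trans (monodromyFiltration_mono N (by push_cast; omega))
  have hker : ker (N ^ n) ≤ monodromyFiltration N (n - 1) :=
    ker_pow_le_monodromyFiltration N (by omega)
  rw [← Submodule.mem_comap, comap_pow_map_pow_succ] at hmem
  exact sup_le hmap hker hmem

section WeightFiltration

variable {F V : Type*} [Field F] [AddCommGroup V] [Module F V] {N : V →ₗ[F] V} {w : ℤ}

theorem isWeightFiltration_monodromyFiltration (hN : IsNilpotent N) (w : ℤ) :
    IsWeightFiltration N w fun i ↦ monodromyFiltration N (i - w) := by
  obtain ⟨n, hn⟩ := hN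
  refine ⟨fun _ _ h ↦ monodromyFiltration_mono N (by omega),
    ⟨w - n, fun i hi ↦ monodromyFiltration_eq_bot hn (by omega)⟩,
    ⟨w + n, fun i hi ↦ monodromyFiltration_eq_top hn (by omega)⟩, fun i ↦ ?_, fun α hα ↦ ?_⟩
  · simp only [sub_right_comm i 2 w]
    exact map_monodromyFiltration_le N (i - w)
  · lift α to ℕ using hα.le
    simp only [Int.toNat_natCast, show w - (α : ℤ) - w = -α by ring, add_sub_cancel_left,
      show w - (α : ℤ) - 1 - w = -α - 1 by ring, show w + (α : ℤ) - 1 - w = α - 1 by ring]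
    exact ⟨le_sup_of_le_right (monodromyFiltration_neg_le_map_pow N α),
      fun v _ ↦ mem_monodromyFiltration_sub_one_of_pow_apply_mem N⟩

namespace IsWeightFiltration

variable {W W' : ℤ → Submodule F V}

theorem monotone (hW : IsWeightFiltration N w W) : Monotone W := hW.1

theorem eventually_sub_eq_bot (hW : IsWeightFiltration N w W) :
    ∀ᶠ n : ℕ in atTop, W (w - n) = ⊥ := by
  obtain ⟨a, ha⟩ := hW.2.1
  filter_upwards [eventually_ge_atTop (w - a).toNat] with n hn
  exact ha _ (by omega)

theorem eventually_add_eq_top (hW : IsWeightFiltration N w W) :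
    ∀ᶠ n : ℕ in atTop, W (w + n) = ⊤ := by
  obtain ⟨b, hb⟩ := hW.2.2.1
  filter_upwards [eventually_ge_atTop (b - w).toNat] with n hn
  exact hb _ (by omega)

theorem map_le (hW : IsWeightFiltration N w W) (i : ℤ) : (W i).map N ≤ W (i - 2) :=
  hW.2.2.2.1 i

theorem map_pow_le (hW : IsWeightFiltration N w W) (n : ℕ) (i : ℤ) :
    (W i).map (N ^ n) ≤ W (i - n * 2) :=
  map_pow_le_of_map_le hW.map_le n i

theorem sub_le_sup_map_pow (hW : IsWeightFiltration N w W) (n : ℕ) :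
    W (w - n) ≤ W (w - n - 1) ⊔ (W (w + n)).map (N ^ n) := by
  rcases n.eq_zero_or_pos with rfl | hn
  · simp [Module.End.one_eq_id]
  · simpa only [Int.toNat_natCast] using (hW.2.2.2.2 n (by omega)).1

theorem mem_add_of_pow_succ_apply_mem (hW : IsWeightFiltration N w W) {n : ℕ} {v : V}
    (hv : v ∈ W (w + (n + 1 : ℕ))) (hNv : (N ^ (n + 1)) v ∈ W (w - (n + 1 : ℕ) - 1)) :
    v ∈ W (w + n) := by
  have hmem := (hW.2.2.2.2 (n + 1 : ℕ) (by positivity)).2 v hv (by rwa [Int.toNat_natCast])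
  exact hW.monotone (by push_cast; omega) hmem

theorem ker_pow_succ_le (hW : IsWeightFiltration N w W) (n : ℕ) :
    ker (N ^ (n + 1)) ≤ W (w + n) := by
  induction n using forall_of_eventually_atTop_of_forall_gt with
  | hP => exact hW.eventually_add_eq_top.mono fun n hn ↦ hn ▸ le_top
  | step n ih =>
    intro v hv
    have hv' : v ∈ W (w + (n + 1 : ℕ)) :=
      ih (n + 1) n.lt_succ_self (N.iterateKer.monotone (n + 1).le_succ hv)
    refine hW.mem_add_of_pow_succ_apply_mem hv' ?_
    rw [mem_ker.1 hv]
    exact zero_mem _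

theorem sub_eq_map_pow (hW : IsWeightFiltration N w W) (n : ℕ) :
    W (w - n) = (W (w + n)).map (N ^ n) := by
  induction n using forall_of_eventually_atTop_of_forall_gt with
  | hP =>
    filter_upwards [hW.eventually_sub_eq_bot] with n hn
    have hle := hW.map_pow_le n (w + n)
    rw [show w + (n : ℤ) - n * 2 = w - n by ring, hn, le_bot_iff] at hle
    rw [hn, hle]
  | step n ih =>
    have hle : W (w - n - 1) ≤ (W (w + n)).map (N ^ n) := calc
      W (w - n - 1) = W (w - (n + 1 : ℕ)) := by congr 1; push_cast; ring
      _ = ((W (w + (n + 1 : ℕ))).map N).map (N ^ n) := by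
        rw [ih (n + 1) n.lt_succ_self, pow_succ, Module.End.mul_eq_comp, Submodule.map_comp]
      _ ≤ (W (w + n)).map (N ^ n) :=
        Submodule.map_mono ((hW.map_le _).trans (hW.monotone (by push_cast; omega)))
    refine le_antisymm ((hW.sub_le_sup_map_pow n).trans (sup_le hle le_rfl)) ?_
    exact (hW.map_pow_le n _).trans (hW.monotone (by omega))

theorem add_eq_map_sup_ker_pow (hW : IsWeightFiltration N w W) (n : ℕ) :
    W (w + n) = (W (w + (n + 2 : ℕ))).map N ⊔ ker (N ^ (n + 1)) := by
  refine le_antisymm ?_ (sup_le ?_ (hW.ker_pow_succ_le n))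
  · rw [← comap_pow_map_pow_succ, ← hW.sub_eq_map_pow, ← Submodule.map_le_iff_le_comap]
    exact (hW.map_pow_le (n + 1) _).trans (hW.monotone (by push_cast; omega))
  · exact (hW.map_le _).trans (hW.monotone (by push_cast; omega))

protected theorem unique (hW : IsWeightFiltration N w W) (hW' : IsWeightFiltration N w W') :
    W = W' := by
  have eq_add (n : ℕ) : W (w + n) = W' (w + n) := by
    induction n using forall_of_eventually_atTop_of_forall_gt with
    | hP =>
      filter_upwards [hW.eventually_add_eq_top, hW'.eventually_add_eq_top] with n hn hn'
      rw [hn, hn']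
    | step n ih =>
      rw [hW.add_eq_map_sup_ker_pow, hW'.add_eq_map_sup_ker_pow, ih (n + 2) (by omega)]
  have eq_sub (n : ℕ) : W (w - n) = W' (w - n) := by
    rw [hW.sub_eq_map_pow, hW'.sub_eq_map_pow, eq_add]
  funext i
  obtain ⟨n, hn | hn⟩ := Int.eq_nat_or_neg (i - w)
  · rw [show i = w + n by omega, eq_add]
  · rw [show i = w - n by omega, eq_sub]

end IsWeightFiltration

end WeightFiltration

theorem weightFiltration_existsUnique_general {F V : Type*} [Field F] [AddCommGroup V]
    [Module F V] {N : V →ₗ[F] V} (hN : IsNilpotent N) (w : ℤ) :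
    ∃! W : ℤ → Submodule F V, IsWeightFiltration N w W :=
  ⟨_, isWeightFiltration_monodromyFiltration hN w,
    fun _ hW ↦ hW.unique (isWeightFiltration_monodromyFiltration hN w)⟩

/-- Existence and uniqueness of the weight filtration centered at `w` associated to a
nilpotent endomorphism of a finite dimensional vector space over a field of
characteristic zero. -/
theorem weightFiltration_existsUnique
    (F V : Type*) [Field F] [CharZero F] [AddCommGroup V] [Module F V]
    [FiniteDimensional F V] (N : V →ₗ[F] V) (hN : IsNilpotent N) (w : ℤ) :
    ∃! W : ℤ → Submodule F V, IsWeightFiltration N w W :=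
  weightFiltration_existsUnique_general hN w
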